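/- arXiv:2504.00177 — 2 statements merged into one kernel-verified Lean document; each statement's English description precedes it below -/
import Mathlib

section
/- For every integer n, the Baumslag–Solitar group B(n, n+2) = ⟨a, t ∣ t a^n t⁻¹ = a^{n+2}⟩ has a subgroup Γ' of index 2 whose abelianization A has no ℤ/2 direct summand, i.e. every x ∈ A with 2x = 0 satisfies x = 2y for some y ∈ A. -/
/-- The relator `t a^m t⁻¹ a^{-n}` of the Baumslag–Solitar group, in the free group
on two generators, where `a` is `FreeGroup.of 0` and `t` is `FreeGroup.of 1`. -/
def BSRel (m n : ℤ) : FreeGroup (Fin 2) :=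
  FreeGroup.of 1 * FreeGroup.of 0 ^ m * (FreeGroup.of 1)⁻¹ * FreeGroup.of 0 ^ (-n)

/-- The Baumslag–Solitar group `B(m,n) = ⟨a, t ∣ t a^m t⁻¹ = a^n⟩`. -/
abbrev BS (m n : ℤ) : Type :=
  PresentedGroup ({BSRel m n} : Set (FreeGroup (Fin 2)))

/-!
If `H` has index two in `⟨x, y⟩`, contains `y` and misses `x`, then `x²`, `y` and `x y x⁻¹` generate
`H`. We take for `H` the elements acting by rotations in a dihedral representation of `B(n, n+2)`.

For even `n`, let `a` act on `ℤ` by a reflection and `t` by a translation. The relation kills the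
class of `a²`, so `H^{ab}` is generated by the classes of `t` and `a t a⁻¹`. Translation length and
exponent sum of `t` send them to `(1, 1)` and `(-1, 1)`, so `H^{ab}` is torsion-free.

For odd `n`, let `a` act on the square by a quarter turn and `t` by a reflection. The classes of
`b = a` and `c = t a t⁻¹` satisfy `c ^ n = b ^ (n + 2)` with coprime exponents, hence are the `n`-th
and the `(n + 2)`-th power of a single `g`, and `H^{ab}` is generated by `g` and the class of `t²`.
If `g ^ i * (t²) ^ j` is killed by squaring, then the exponent sum gives `j = 0` and the rotation
angle gives `4 ∣ 2 i`, so this element is the square of a power of `g`.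
-/

open Subgroup Abelianization

section IndexTwo

variable {G : Type*} [Group G] {H : Subgroup G} {x : G}

theorem index_comap_eq_two {D : Type*} [Group D] {K : Subgroup D} (hK : K.index = 2) (F : G →* D)
    (hx : F x ∉ K) : (K.comap F).index = 2 := by
  refine index_eq_two_iff.2 ⟨x, fun g => ?_⟩
  simp only [mem_comap, map_mul, mul_mem_iff_of_index_two hK, hx, iff_false]
  exact xor_not_left.2 Iff.rfl

theorem isComplement_pair_of_index_two (hH : H.index = 2) (hx : x ∉ H) :
    IsComplement (H : Set G) {1, x} := by
  rw [isComplement_iff_existsUnique_mul_inv_mem]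
  intro g
  by_cases hg : g ∈ H
  · refine ⟨⟨1, by simp⟩, by simpa using hg, ?_⟩
    rintro ⟨r, rfl | rfl⟩ hr
    · rfl
    · simp_all [mul_mem_iff_of_index_two hH]
  · refine ⟨⟨x, by simp⟩, by simp [mul_mem_iff_of_index_two hH, hg, hx], ?_⟩
    rintro ⟨r, rfl | rfl⟩ hr
    · simp_all
    · rfl

-- Schreier's lemma for the transversal `{1, x}`.
theorem eq_closure_of_index_two (hH : H.index = 2) (hx : x ∉ H) {T : Set G} (hT : T ⊆ H)
    (hgen : closure (insert x T) = ⊤) :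
    H = closure (insert (x ^ 2) ((fun y => x * y * x⁻¹) '' T ∪ T)) := by
  have hnormal := normal_of_index_eq_two hH
  have hR := isComplement_pair_of_index_two hH hx
  set K := closure (insert (x ^ 2) ((fun y => x * y * x⁻¹) '' T ∪ T))
  have schreier_mem {g r : G} (hr : r ∈ ({1, x} : Set G)) (hgrH : g * r⁻¹ ∈ H)
      (hgrK : g * r⁻¹ ∈ K) : g * (hR.toRightFun g : G)⁻¹ ∈ K := by
    have heq : hR.toRightFun g = ⟨r, hr⟩ :=
      ((isComplement_iff_existsUnique_mul_inv_mem.1 hR) g).unique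
        (hR.mul_inv_toRightFun_mem g) hgrH
    rwa [heq]
  apply le_antisymm
  · rw [← closure_mul_image_eq hR (by simp) hgen, closure_le]
    rintro _ ⟨_, ⟨ρ, rfl | rfl, s, rfl | hs, rfl⟩, rfl⟩
    · exact schreier_mem (r := s) (by simp) (by simp) (by simp)
    · exact schreier_mem (r := 1) (by simp) (by simpa using hT hs)
        (subset_closure (by simp [hs]))
    · exact schreier_mem (r := 1) (by simp) (by simpa using mul_self_mem_of_index_two hH s)
        (subset_closure (by simp [sq]))
    · exact schreier_mem (r := ρ) (by simp) (hnormal.conj_mem s (hT hs) ρ)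
        (subset_closure (by simp [hs]))
  · rw [closure_le]
    rintro _ (rfl | ⟨y, hy, rfl⟩ | hy)
    · exact sq_mem_of_index_two hH x
    · exact hnormal.conj_mem y (hT hy) x
    · exact hT hy

end IndexTwo

section Abelianization

variable {G : Type*} [Group G] {H : Subgroup G}

theorem closure_abelianization_of_image_eq_top {S : Set G} (hS : closure S = ⊤) :
    closure (of '' S) = ⊤ := by
  rw [← MonoidHom.map_closure, hS]
  exact map_top_of_surjective _ (QuotientGroup.mk'_surjective _)

theorem exists_closure_abelianization_eq_top_of_index_two (hH : H.index = 2) {x y : G}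
    (hx : x ∉ H) (hy : y ∈ H) (hgen : closure {x, y} = ⊤) :
    ∃ X Y Z : H, (X : G) = x ^ 2 ∧ (Y : G) = y ∧ (Z : G) = x * y * x⁻¹ ∧
      closure {of X, of Y, of Z} = ⊤ := by
  let X : H := ⟨x ^ 2, sq_mem_of_index_two hH x⟩
  let Y : H := ⟨y, hy⟩
  let Z : H := ⟨x * y * x⁻¹, (normal_of_index_eq_two hH).conj_mem y hy x⟩
  refine ⟨X, Y, Z, rfl, rfl, rfl, ?_⟩
  have hXYZ : closure {X, Y, Z} = ⊤ := by
    apply map_injective H.subtype_injective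
    have hclosure := eq_closure_of_index_two hH hx (T := {y}) (by simpa) hgen
    simpa [X, Y, Z, MonoidHom.map_closure, Set.image_insert_eq, ← MonoidHom.range_eq_map]
      using hclosure.symm
  simpa [Set.image_insert_eq] using closure_abelianization_of_image_eq_top hXYZ

theorem map_eq_one_of_abelianization_of_eq_one {D : Type*} [Group D] (F : G →* D)
    (hF : ∀ g ∈ H, ∀ h ∈ H, Commute (F g) (F h)) {w : H} (hw : of w = 1) :
    F w = 1 := by
  have hker : commutator H ≤ (F.comp H.subtype).ker := by
    rw [commutator_def, commutator_le]
    intro g _ h _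
    rw [MonoidHom.mem_ker, map_commutatorElement, commutatorElement_eq_one_iff_commute]
    exact hF g g.2 h h.2
  exact hker (by rwa [← Abelianization.ker_of])

end Abelianization

section CommGroup

variable {A : Type*} [CommGroup A]

theorem exists_eq_zpow_of_zpow_eq_zpow {m n : ℤ} (hmn : IsCoprime m n) {a b : A}
    (h : b ^ m = a ^ n) : ∃ g : A, a = g ^ m ∧ b = g ^ n := by
  obtain ⟨u, v, huv⟩ := hmn
  refine ⟨a ^ u * b ^ v, ?_, ?_⟩
  · calc a = a ^ (u * m) * (a ^ n) ^ v := by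
          rw [← zpow_mul, ← zpow_add, mul_comm n, huv, zpow_one]
      _ = (a ^ u * b ^ v) ^ m := by
          rw [← h, mul_zpow, ← zpow_mul, ← zpow_mul, ← zpow_mul, mul_comm m]
  · calc b = (b ^ m) ^ u * b ^ (v * n) := by
          rw [← zpow_mul, ← zpow_add, mul_comm m, huv, zpow_one]
      _ = (a ^ u * b ^ v) ^ n := by
          rw [h, mul_zpow, ← zpow_mul, ← zpow_mul, ← zpow_mul, mul_comm n]

/-- A commutative group is 2-avoiding if its elements killed by squaring are squares. For a finitely
generated group this says that `ℤ/2` is not a direct summand. -/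
def TwoAvoiding (A : Type*) [CommGroup A] : Prop :=
  ∀ x : A, x ^ 2 = 1 → ∃ y : A, x = y ^ 2

theorem TwoAvoiding.of_closure_pair {u v : A} (hgen : closure {u, v} = ⊤)
    (heven : ∀ i j : ℤ, (u ^ i * v ^ j) ^ 2 = 1 → Even i ∧ Even j) : TwoAvoiding A := by
  intro x hx
  obtain ⟨i, j, rfl⟩ := mem_closure_pair.1 (hgen ▸ mem_top x)
  obtain ⟨⟨k, rfl⟩, ⟨l, rfl⟩⟩ := heven i j hx
  exact ⟨u ^ k * v ^ l, by rw [mul_pow, zpow_add, zpow_add, ← sq, ← sq]⟩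

end CommGroup

section Dihedral

open DihedralGroup

/-- The group of rotations of the `m`-gon, or the group of translations of `ℤ` if `m = 0`. -/
def rotations (m : ℕ) : Subgroup (DihedralGroup m) := zpowers (r 1)

variable {m : ℕ}

theorem r_intCast_eq_one_iff {k : ℤ} : r (k : ZMod m) = 1 ↔ (m : ℤ) ∣ k := by
  rw [one_def, r.injEq, ZMod.intCast_zmod_eq_zero_iff_dvd]

theorem sr_zpow_of_even (i : ZMod m) {n : ℤ} (hn : Even n) : sr i ^ n = 1 := by
  obtain ⟨k, rfl⟩ := hn
  rw [zpow_add, ← (Commute.refl (sr i)).mul_zpow, sr_mul_self, one_zpow]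

theorem r_mem_rotations (i : ZMod m) : r i ∈ rotations m := by
  obtain ⟨k, rfl⟩ := ZMod.intCast_surjective i
  exact mem_zpowers_iff.2 ⟨k, r_one_zpow k⟩

theorem sr_notMem_rotations (i : ZMod m) : sr i ∉ rotations m := by
  simp [rotations, mem_zpowers_iff]

theorem index_rotations : (rotations m).index = 2 := by
  refine index_eq_two_iff.2 ⟨sr 0, ?_⟩
  rintro (i | i) <;> simp [r_mem_rotations, sr_notMem_rotations]

theorem commute_of_mem_rotations {g h : DihedralGroup m} (hg : g ∈ rotations m)
    (hh : h ∈ rotations m) : Commute g h := by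
  obtain ⟨i, rfl⟩ := hg
  obtain ⟨j, rfl⟩ := hh
  exact (Commute.refl (r 1)).zpow_zpow i j

end Dihedral

namespace BS

variable {m n : ℤ}

/-- The generator `a` of `B(m,n)`. -/
def a : BS m n := PresentedGroup.of 0

/-- The stable letter `t` of `B(m,n)`. -/
def t : BS m n := PresentedGroup.of 1

theorem closure_a_t : closure {(a : BS m n), t} = ⊤ := by
  rw [← PresentedGroup.closure_range_of]
  congr 1
  ext z
  simp [a, t, Fin.exists_fin_two, eq_comm]

theorem t_mul_a_zpow_mul_t_inv : (t * a ^ m * t⁻¹ : BS m n) = a ^ n := by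
  have hrel : PresentedGroup.mk {BSRel m n} (BSRel m n) = 1 :=
    PresentedGroup.one_of_mem (Set.mem_singleton _)
  rw [← mul_inv_eq_one, ← zpow_neg, ← hrel]
  rfl

section Lift

variable {W : Type*} [Group W] {α τ : W}

theorem lift_BSRel_eq_one (h : τ * α ^ m * τ⁻¹ = α ^ n) :
    ∀ ρ ∈ ({BSRel m n} : Set (FreeGroup (Fin 2))), FreeGroup.lift ![α, τ] ρ = 1 := by
  rintro _ rfl
  simp [BSRel, h]

/-- The homomorphism from `B(m,n)` sending `a` to `α` and `t` to `τ`. -/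
def lift (h : τ * α ^ m * τ⁻¹ = α ^ n) : BS m n →* W :=
  PresentedGroup.toGroup (lift_BSRel_eq_one h)

theorem lift_a (h : τ * α ^ m * τ⁻¹ = α ^ n) : lift h a = α :=
  PresentedGroup.toGroup.of (lift_BSRel_eq_one h)

theorem lift_t (h : τ * α ^ m * τ⁻¹ = α ^ n) : lift h t = τ :=
  PresentedGroup.toGroup.of (lift_BSRel_eq_one h)

end Lift

/-- The exponent sum of the stable letter. -/
def tExponent : BS m n →* Multiplicative ℤ :=
  lift (α := 1) (τ := Multiplicative.ofAdd 1) (by simp)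

@[simp]
theorem tExponent_a : tExponent (a : BS m n) = 1 := lift_a _

@[simp]
theorem tExponent_t : tExponent (t : BS m n) = Multiplicative.ofAdd 1 := lift_t _

open DihedralGroup

section Even

/-- For even `n`, the action of `B(n, n+2)` on `ℤ` with `a` a reflection and `t` a translation. -/
def evenDihedralHom (hn : Even n) : BS n (n + 2) →* DihedralGroup 0 :=
  lift (α := sr 0) (τ := r 1) <| by
    rw [sr_zpow_of_even 0 hn, sr_zpow_of_even 0 (hn.add even_two)]
    simp

@[simp]
theorem evenDihedralHom_a (hn : Even n) : evenDihedralHom hn a = sr 0 := lift_a _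

@[simp]
theorem evenDihedralHom_t (hn : Even n) : evenDihedralHom hn t = r 1 := lift_t _

theorem abelianization_of_eq_one_of_coe_eq_a_sq (hn : Even n) {H : Subgroup (BS n (n + 2))}
    {X Y : H} (hX : (X : BS n (n + 2)) = a ^ 2) (hY : (Y : BS n (n + 2)) = t) : of X = 1 := by
  obtain ⟨k, rfl⟩ := hn.two_dvd
  have hX_zpow (j : ℤ) : (X : BS (2 * k) (2 * k + 2)) ^ j = a ^ (2 * j) := by
    rw [hX, zpow_mul, zpow_ofNat]
  have hrel : Y * X ^ k * Y⁻¹ = X ^ (k + 1) := by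
    apply Subtype.ext
    simpa [hX_zpow, hY, mul_add] using t_mul_a_zpow_mul_t_inv (m := 2 * k) (n := 2 * k + 2)
  simpa [zpow_add_one] using congrArg of hrel

theorem exists_twoAvoiding_of_even (hn : Even n) :
    ∃ H : Subgroup (BS n (n + 2)), H.index = 2 ∧ TwoAvoiding (Abelianization H) := by
  let H := (rotations 0).comap (evenDihedralHom hn)
  have ha : a ∉ H := by simp [H, sr_notMem_rotations]
  have ht : t ∈ H := by simp [H, r_mem_rotations]
  have hH : H.index = 2 := index_comap_eq_two index_rotations _ ha
  obtain ⟨X, Y, Z, hX, hY, hZ, hgen⟩ :=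
    exists_closure_abelianization_eq_top_of_index_two hH ha ht closure_a_t
  rw [abelianization_of_eq_one_of_coe_eq_a_sq hn hX hY, closure_insert_one] at hgen
  refine ⟨H, hH, .of_closure_pair hgen fun i j hij => ?_⟩
  have hw : of ((Y ^ i * Z ^ j) ^ 2) = 1 := by simpa using hij
  have hsub : i - j = 0 := by
    have h := map_eq_one_of_abelianization_of_eq_one (evenDihedralHom hn)
      (fun _ hg _ hh => commute_of_mem_rotations hg hh) hw
    have hrot : r (Int.cast ((i - j) * 2) : ZMod 0) = 1 := by
      simpa [hY, hZ, ← sub_eq_add_neg] using h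
    have hdvd := r_intCast_eq_one_iff.1 hrot
    lia
  have hadd : i + j = 0 := by
    have h := map_eq_one_of_abelianization_of_eq_one tExponent (fun _ _ _ _ => .all _ _) hw
    simpa [hY, hZ] using congrArg Multiplicative.toAdd h
  exact ⟨⟨0, by lia⟩, ⟨0, by lia⟩⟩

end Even

section Odd

/-- For odd `n`, the action of `B(n, n+2)` on the square with `a` a quarter turn and `t` a
reflection. -/
def oddDihedralHom (hn : Odd n) : BS n (n + 2) →* DihedralGroup 4 :=
  lift (α := r 1) (τ := sr 0) <| by
    have hmod : ((2 * n + 2 : ℤ) : ZMod 4) = 0 := by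
      obtain ⟨k, rfl⟩ := hn
      exact (ZMod.intCast_zmod_eq_zero_iff_dvd _ 4).2 ⟨k + 1, by push_cast; ring⟩
    simp only [r_one_zpow, sr_mul_r, inv_sr, sr_mul_sr, r.injEq]
    push_cast at hmod ⊢
    linear_combination -hmod

@[simp]
theorem oddDihedralHom_a (hn : Odd n) : oddDihedralHom hn a = r 1 := lift_a _

@[simp]
theorem oddDihedralHom_t (hn : Odd n) : oddDihedralHom hn t = sr 0 := lift_t _

theorem exists_abelianization_of_eq_zpow (hn : Odd n) {H : Subgroup (BS n (n + 2))} {Y Z : H}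
    (hY : (Y : BS n (n + 2)) = a) (hZ : (Z : BS n (n + 2)) = t * a * t⁻¹) :
    ∃ g : Abelianization H, of Y = g ^ n ∧ of Z = g ^ (n + 2) := by
  have hcop : IsCoprime n (n + 2) := by
    obtain ⟨k, rfl⟩ := hn
    exact ⟨k + 1, -k, by ring⟩
  have hrel : Z ^ n = Y ^ (n + 2) := by
    apply Subtype.ext
    simpa [hY, hZ, conj_zpow] using t_mul_a_zpow_mul_t_inv (m := n) (n := n + 2)
  exact exists_eq_zpow_of_zpow_eq_zpow hcop (by simpa using congrArg of hrel)

theorem even_and_eq_zero_of_abelianization_of_sq_eq_one (hn : Odd n)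
    {X Y : (rotations 4).comap (oddDihedralHom hn)} (hX : (X : BS n (n + 2)) = t ^ 2)
    (hY : (Y : BS n (n + 2)) = a) {i j : ℤ} (hw : of ((Y ^ i * X ^ j) ^ 2) = 1) :
    Even i ∧ j = 0 := by
  have hi : Even i := by
    have h := map_eq_one_of_abelianization_of_eq_one (oddDihedralHom hn)
      (fun _ hg _ hh => commute_of_mem_rotations hg hh) hw
    have hrot : r (Int.cast (i * 2) : ZMod 4) = 1 := by simpa [hX, hY, sq (sr _)] using h
    have hdvd := r_intCast_eq_one_iff.1 hrot
    exact even_iff_two_dvd.2 (by lia)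
  have hj : j = 0 := by
    have h := map_eq_one_of_abelianization_of_eq_one tExponent (fun _ _ _ _ => .all _ _) hw
    simpa [hX, hY] using congrArg Multiplicative.toAdd h
  exact ⟨hi, hj⟩

theorem exists_twoAvoiding_of_odd (hn : Odd n) :
    ∃ H : Subgroup (BS n (n + 2)), H.index = 2 ∧ TwoAvoiding (Abelianization H) := by
  let H := (rotations 4).comap (oddDihedralHom hn)
  have ht : t ∉ H := by simp [H, sr_notMem_rotations]
  have ha : a ∈ H := by simp [H, r_mem_rotations]
  have hH : H.index = 2 := index_comap_eq_two index_rotations _ ht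
  obtain ⟨X, Y, Z, hX, hY, hZ, hgen⟩ := exists_closure_abelianization_eq_top_of_index_two hH ht ha
    (Set.pair_comm a t ▸ closure_a_t)
  obtain ⟨g, hgY, hgZ⟩ := exists_abelianization_of_eq_zpow hn hY hZ
  have hgen' : closure {g, of X} = ⊤ := by
    have hgmem : g ∈ closure {g, of X} := subset_closure (by simp)
    have hXmem : of X ∈ closure {g, of X} := subset_closure (by simp)
    rw [eq_top_iff, ← hgen, hgY, hgZ]
    simp [closure_le, Set.insert_subset_iff, hXmem, zpow_mem hgmem]
  refine ⟨H, hH, .of_closure_pair hgen' fun i j hij => ?_⟩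
  -- Only `g ^ n` is known explicitly, so the relation is raised to the (odd) power `n`.
  have hw : of ((Y ^ i * X ^ (j * n)) ^ 2) = 1 :=
    calc of ((Y ^ i * X ^ (j * n)) ^ 2) = ((g ^ n) ^ i * of X ^ (j * n)) ^ 2 := by simp [hgY]
      _ = ((g ^ i * of X ^ j) ^ 2) ^ n := by
        rw [zpow_mul, zpow_comm g n i, ← mul_zpow, ← zpow_natCast, ← zpow_natCast, zpow_comm]
      _ = 1 := by rw [hij, one_zpow]
  obtain ⟨hi, hjn⟩ := even_and_eq_zero_of_abelianization_of_sq_eq_one hn hX hY hw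
  have hj : j = 0 := (mul_eq_zero.1 hjn).resolve_right (by rintro rfl; simp at hn)
  exact ⟨hi, hj ▸ Even.zero⟩

end Odd

end BS

theorem stmt_6 (n : ℤ) :
    ∃ Γ' : Subgroup (BS n (n + 2)), Γ'.index = 2 ∧
      ∀ x : Abelianization ↥Γ', x ^ 2 = 1 → ∃ y : Abelianization ↥Γ', x = y ^ 2 := by
  rcases Int.even_or_odd n with hn | hn
  · exact BS.exists_twoAvoiding_of_even hn
  · exact BS.exists_twoAvoiding_of_odd hn
end

section
/- Let p ≥ 1 and l ≥ 1 be integers, set k = 2l, and let Γ = G_{2p−1, 2p+1, k} = ⟨a, t ∣ t^k a^{2p−1} t^{−k} = a^{2p+1}⟩. Let θ : Γ → ℤ/2 be the group homomorphism determined by θ(a) = 1 and θ(t) = 0 (well defined since the relator has exponent sum −2 in a and 0 in t), and let Γ' = ker θ. Then Γ' has index 2 in Γ and the abelianization of Γ' is isomorphic to ℤ × ℤ/(4l). -/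
/-- The relator `t^k a^m t^{-k} a^{-n}` of the Baumslag–Strebel group, in the free
group on two generators, where `a` is `FreeGroup.of 0` and `t` is `FreeGroup.of 1`. -/
def BStRel (m n k : ℤ) : FreeGroup (Fin 2) :=
  FreeGroup.of 1 ^ k * FreeGroup.of 0 ^ m * FreeGroup.of 1 ^ (-k) * FreeGroup.of 0 ^ (-n)

/-- The Baumslag–Strebel group `G_{m,n,k} = ⟨a, t ∣ t^k a^m t^{-k} = a^n⟩`. -/
abbrev BSt (m n k : ℤ) : Type :=
  PresentedGroup ({BStRel m n k} : Set (FreeGroup (Fin 2)))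

/-!
Let `Γ = G_{2p-1,2p+1,k}` and let `H` be a subgroup of index two that contains `t` but not `a`.
By Schreier's lemma `H` is generated by `t`, `t' = a t a⁻¹` and `b = a²`. Since
`a ^ (2p ± 1)` is a power of `b` times `a`, the relator of `Γ` becomes `k t = b + k t'` in `Hᵃᵇ`
(written additively); conjugation by `a` swaps `t` and `t'` there and fixes `b`, so also
`k t' = b + k t`. Hence `b = k (t - t')` and `2k (t - t') = 0`. There are no further relations:
whenever `u, v, w` in a commutative group `D` satisfy these two, inducing from `H` to `Γ` the
homomorphism `t ↦ u`, `t' ↦ v`, `b ↦ w` gives a homomorphism from `Γ` to the wreath product of `D`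
by `ℤ/2`, from which the original one is recovered. So `Hᵃᵇ` is `ℤ × ℤ/2k`, with basis `t`,
`t - t'`.
-/

theorem zpow_two_mul_add_one {G : Type*} [Group G] (x : G) (n : ℤ) :
    x ^ (2 * n + 1) = (x ^ 2) ^ n * x := by
  rw [zpow_add_one, zpow_mul, zpow_ofNat]

theorem zpow_eq_mul_zpow_swap_iff {D : Type*} [CommGroup D] {u v w : D} {k : ℤ} :
    u ^ k = w * v ^ k ∧ v ^ k = w * u ^ k ↔ w = (u / v) ^ k ∧ (u / v) ^ (2 * k) = 1 := by
  rw [two_mul, zpow_add, div_zpow, ← eq_div_iff_mul_eq', ← div_eq_iff_eq_mul, eq_comm]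
  refine and_congr_right ?_
  rintro rfl
  rw [← div_eq_iff_eq_mul, one_div_div, eq_comm]

section IndexTwo

open Subgroup

variable {G : Type*} [Group G]

theorem index_ker_eq_card_of_ne_one {C : Type*} [Group C] [Fact (Nat.card C).Prime] {θ : G →* C}
    (hθ : θ ≠ 1) : θ.ker.index = Nat.card C := by
  have hrange : θ.range = ⊤ :=
    θ.range.eq_bot_or_eq_top_of_prime_card.resolve_left (mt MonoidHom.range_eq_bot_iff.1 hθ)
  rw [index_ker, hrange, card_top]

variable {H : Subgroup G} {a : G}

theorem isComplement_pair_of_index_eq_two (hH : H.index = 2) (ha : a ∉ H) :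
    IsComplement (H : Set G) {1, a} := by
  rw [isComplement_iff_existsUnique_mul_inv_mem]
  intro g
  by_cases hg : g ∈ H
  · refine ⟨⟨1, by simp⟩, by simpa, ?_⟩
    rintro ⟨r, rfl | rfl⟩ hr
    · rfl
    · simp_all [mul_mem_iff_of_index_two hH]
  · refine ⟨⟨a, by simp⟩, by simp_all [mul_mem_iff_of_index_two hH], ?_⟩
    rintro ⟨r, rfl | rfl⟩ hr
    · simp_all
    · rfl

theorem closure_insert_sq_union_conj_eq_top [H.Normal] (hH : H.index = 2) (ha : a ∉ H) {S : Set H}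
    (hS : closure (insert a (Subtype.val '' S)) = ⊤) {b : H} (hb : a ^ 2 = b) :
    closure (insert b (S ∪ MulAut.conjNormal a '' S)) = ⊤ := by
  have hR := isComplement_pair_of_index_eq_two hH ha
  rw [eq_top_iff, ← closure_mul_image_eq_top hR (by simp) hS, closure_le]
  suffices h : ∀ r ∈ ({1, a} : Set G), ∀ s ∈ insert a (Subtype.val '' S), ∀ ρ ∈ ({1, a} : Set G),
      ∀ hmem : r * s * ρ⁻¹ ∈ H,
        (⟨r * s * ρ⁻¹, hmem⟩ : H) ∈ closure (insert b (S ∪ MulAut.conjNormal a '' S)) by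
    rintro _ ⟨_, ⟨r, hr, s, hs, rfl⟩, rfl⟩
    exact h r hr s hs _ (Subtype.prop _) _
  rintro _ (rfl | rfl) _ (rfl | ⟨x, hx, rfl⟩) _ (rfl | rfl) hmem
  · exact absurd (by simpa using hmem) ha
  · simp only [one_mul, mul_inv_cancel]
    exact one_mem _
  · exact subset_closure (by simp [hx])
  · exact absurd (by simpa [mul_mem_cancel_left x.2] using hmem) ha
  · exact subset_closure (Or.inl (Subtype.ext (by simpa [sq] using hb)))
  · exact absurd (by simpa using hmem) ha
  · exact absurd (by simpa [mul_mem_cancel_right x.2] using hmem) ha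
  · exact subset_closure (Or.inr (Or.inr ⟨x, hx, Subtype.ext (by simp)⟩))

end IndexTwo

section ConjugationRelations

variable {G : Type*} [Group G] {H : Subgroup G} [H.Normal] {a : G} {b t : H} {p k : ℤ}
  {D : Type*} [CommGroup D]

theorem map_zpow_eq_map_sq_mul_map_conj_zpow (hb : a ^ 2 = b)
    (hrel : (t : G) ^ k * a ^ (2 * p - 1) = a ^ (2 * p + 1) * (t : G) ^ k) (f : H →* D) :
    f t ^ k = f b * f (MulAut.conjNormal a t) ^ k := by
  have hH : t ^ k * b ^ (p - 1) = b ^ p * MulAut.conjNormal a (t ^ k) := by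
    apply Subtype.ext
    rw [show 2 * p - 1 = 2 * (p - 1) + 1 by ring, zpow_two_mul_add_one, zpow_two_mul_add_one,
      hb, ← mul_assoc] at hrel
    simpa [-map_zpow, mul_assoc] using eq_mul_inv_of_mul_eq hrel
  have hf := congrArg f hH
  simp only [map_mul, map_zpow] at hf
  rw [← mul_left_inj (f b ^ (p - 1)), hf, mul_right_comm, ← zpow_one_add, add_sub_cancel]

theorem map_conj_zpow_eq_map_sq_mul_map_zpow (hb : a ^ 2 = b)
    (hrel : (t : G) ^ k * a ^ (2 * p - 1) = a ^ (2 * p + 1) * (t : G) ^ k) (f : H →* D) :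
    f (MulAut.conjNormal a t) ^ k = f b * f t ^ k := by
  have hconj_b : MulAut.conjNormal a b = b := Subtype.ext (by simp [← hb, sq, mul_assoc])
  have hconj_conj : MulAut.conjNormal a (MulAut.conjNormal a t) = b * t * b⁻¹ :=
    Subtype.ext (by simp [← hb, sq, mul_assoc])
  simpa [hconj_b, hconj_conj] using
    map_zpow_eq_map_sq_mul_map_conj_zpow hb hrel (f.comp (MulAut.conjNormal a).toMonoidHom)

end ConjugationRelations

section Holomorph

open SemidirectProduct

/-- The homomorphism to the normal factor `N` underlying a homomorphism to `N ⋊[φ] Q` whose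
composition with the projection to `Q` is trivial. -/
def leftHom {H N Q : Type*} [Group H] [Group N] [Group Q] {φ : Q →* MulAut N}
    (F : H →* N ⋊[φ] Q) (hF : rightHom.comp F = 1) : H →* N where
  toFun h := (F h).left
  map_one' := by simp
  map_mul' g h := by
    have hg : (F g).right = 1 := DFunLike.congr_fun hF g
    simp [hg]

/-- The holomorph of `D × D`. It contains the wreath product of `D` by `ℤ/2`, in which
representations induced from a subgroup of index two take their values; acting by all
automorphisms saves specifying the action of `ℤ/2`. -/
abbrev ProdHolomorph (D : Type*) [CommGroup D] : Type _ :=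
  (D × D) ⋊[MonoidHom.id (MulAut (D × D))] MulAut (D × D)

variable {D : Type*} [CommGroup D]

/-- The element `((w, 1), swap)` of the holomorph of `D × D`: the value at `a ∉ H` of the
homomorphism induced from one on an index-two subgroup `H` that sends `a ^ 2` to `w`. -/
def twistedSwap (w : D) : ProdHolomorph D := ⟨(w, 1), MulEquiv.prodComm⟩

theorem twistedSwap_sq (w : D) : twistedSwap w ^ 2 = inl (w, w) := by
  rw [sq]
  ext x <;> simp [twistedSwap]

theorem twistedSwap_zpow_two_mul_add_one (w : D) (n : ℤ) :
    twistedSwap w ^ (2 * n + 1) = ⟨(w ^ (n + 1), w ^ n), MulEquiv.prodComm⟩ := by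
  rw [zpow_two_mul_add_one, twistedSwap_sq, ← map_zpow]
  ext <;> simp [twistedSwap, zpow_add_one]

theorem twistedSwap_mul_inl (w u v : D) :
    twistedSwap w * inl (u, v) = inl (v, u) * twistedSwap w := by
  refine SemidirectProduct.ext (Prod.ext ?_ ?_) rfl <;> simp [twistedSwap, mul_comm]

theorem inl_zpow_mul_twistedSwap_zpow {u v w : D} {p k : ℤ} (huv : u ^ k = w * v ^ k)
    (hvu : v ^ k = w * u ^ k) :
    inl (u, v) ^ k * twistedSwap w ^ (2 * p - 1) =
      twistedSwap w ^ (2 * p + 1) * inl (u, v) ^ k := by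
  rw [show 2 * p - 1 = 2 * (p - 1) + 1 by ring, twistedSwap_zpow_two_mul_add_one,
    twistedSwap_zpow_two_mul_add_one, ← map_zpow]
  refine SemidirectProduct.ext (Prod.ext ?_ ?_) rfl
  · simp [huv, zpow_add_one, mul_comm, mul_left_comm, mul_assoc]
  · simp [hvu, zpow_sub_one, mul_comm, mul_left_comm w, mul_assoc]

end Holomorph

section IntProdZMod

open Multiplicative (ofAdd)

variable {N : ℕ}

theorem closure_ofAdd_int_prod_zmod :
    Subgroup.closure {ofAdd ((1 : ℤ), (0 : ZMod N)), ofAdd (0, 1)} = ⊤ := by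
  refine (Subgroup.eq_top_iff' _).2 fun x ↦ ?_
  obtain ⟨n, hn⟩ := ZMod.intCast_surjective x.toAdd.2
  rw [Subgroup.mem_closure_pair]
  refine ⟨x.toAdd.1, n, ?_⟩
  simp [← ofAdd_zsmul, ← ofAdd_add, hn]

theorem exists_hom_int_prod_zmod {D : Type*} [CommGroup D] (x : D) {y : D} (hy : y ^ N = 1) :
    ∃ f : Multiplicative (ℤ × ZMod N) →* D, f (ofAdd (1, 0)) = x ∧ f (ofAdd (0, 1)) = y := by
  let g : ZMod N →+ Additive D :=
    ZMod.lift N ⟨zmultiplesHom _ (Additive.ofMul y), by simp [← ofMul_pow, hy]⟩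
  have hg : g 1 = Additive.ofMul y := by
    simpa [g] using ZMod.lift_coe N ⟨zmultiplesHom _ (Additive.ofMul y), _⟩ 1
  refine ⟨AddMonoidHom.toMultiplicativeLeft
    ((zmultiplesHom _ (Additive.ofMul x)).coprod g), ?_, ?_⟩
  · simp
  · simp [hg]

theorem nonempty_abelianization_mulEquiv_int_prod_zmod {H : Type*} [Group H] {t t' b : H} {k : ℤ}
    (hgen : Subgroup.closure {b, t, t'} = ⊤)
    (hb : Abelianization.of b = (Abelianization.of t / Abelianization.of t') ^ k)
    (hN : (Abelianization.of t / Abelianization.of t') ^ N = 1)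
    {φ : H →* Multiplicative (ℤ × ZMod N)} (hφt : φ t = ofAdd (1, 0))
    (hφt' : φ t' = ofAdd (1, 0) / ofAdd (0, 1)) (hφb : φ b = ofAdd (0, 1) ^ k) :
    Nonempty (Abelianization H ≃* Multiplicative (ℤ × ZMod N)) := by
  obtain ⟨ψ, hψt, hψs⟩ := exists_hom_int_prod_zmod (Abelianization.of t) hN
  have hψφ : ψ.comp φ = Abelianization.of := MonoidHom.eq_of_eqOn_dense hgen <| by
    rintro _ (rfl | rfl | rfl)
    · rw [MonoidHom.comp_apply, hφb, map_zpow, hψs, hb]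
    · rw [MonoidHom.comp_apply, hφt, hψt]
    · rw [MonoidHom.comp_apply, hφt', map_div, hψt, hψs, div_div_cancel]
  have hφψ : (Abelianization.lift φ).comp ψ = MonoidHom.id _ :=
    MonoidHom.eq_of_eqOn_dense closure_ofAdd_int_prod_zmod <| by
      rintro _ (rfl | rfl)
      · simp [hψt, hφt]
      · simp [hψs, hφt, hφt']
  have hψφ' : ψ.comp (Abelianization.lift φ) = MonoidHom.id _ := by
    ext h
    simpa using DFunLike.congr_fun hψφ h
  exact ⟨MonoidHom.toMulEquiv (Abelianization.lift φ) ψ hψφ' hφψ⟩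

end IntProdZMod

namespace BSt

open PresentedGroup (of)

variable {m n k : ℤ}

theorem of_one_zpow_mul_of_zero_zpow :
    (of 1 ^ k * of 0 ^ m : BSt m n k) = of 0 ^ n * of 1 ^ k := by
  have h : (of 1 ^ k * of 0 ^ m * of 1 ^ (-k) * of 0 ^ (-n) : BSt m n k) = 1 :=
    PresentedGroup.one_of_mem (rels := {BStRel m n k}) rfl
  simpa [mul_inv_eq_one, mul_inv_eq_iff_eq_mul] using h

theorem closure_of_zero_of_one : Subgroup.closure {(of 0 : BSt m n k), of 1} = ⊤ := by
  rw [← PresentedGroup.closure_range_of]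
  congr 1
  ext
  simp [Fin.exists_fin_two, eq_comm]

section Lift

variable {G : Type*} [Group G] {x y : G}

/-- The homomorphism from the Baumslag–Strebel group that sends `a` to `x` and `t` to `y`. -/
def lift (h : y ^ k * x ^ m = x ^ n * y ^ k) : BSt m n k →* G :=
  PresentedGroup.toGroup (f := ![x, y]) <| by
    rintro _ rfl
    simpa [BStRel, mul_inv_eq_one, mul_inv_eq_iff_eq_mul] using h

@[simp]
theorem lift_of_zero (h : y ^ k * x ^ m = x ^ n * y ^ k) : lift h (of 0) = x :=
  PresentedGroup.toGroup.of _

@[simp]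
theorem lift_of_one (h : y ^ k * x ^ m = x ^ n * y ^ k) : lift h (of 1) = y :=
  PresentedGroup.toGroup.of _

end Lift

theorem closure_eq_top_of_index_eq_two {H : Subgroup (BSt m n k)} [H.Normal] (hH : H.index = 2)
    (ha : of 0 ∉ H) {t b : H} (ht : of 1 = t.val) (hb : of 0 ^ 2 = b.val) :
    Subgroup.closure {b, t, MulAut.conjNormal (of 0) t} = ⊤ := by
  have hS : Subgroup.closure (insert (of 0) (Subtype.val '' ({t} : Set H))) = ⊤ := by
    rw [Set.image_singleton, ← ht, closure_of_zero_of_one]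
  simpa only [Set.image_singleton, Set.singleton_union] using
    closure_insert_sq_union_conj_eq_top hH ha hS hb

variable {p : ℤ} {H : Subgroup (BSt (2 * p - 1) (2 * p + 1) k)}

theorem exists_hom_of_index_eq_two [H.Normal] (hH : H.index = 2) (ha : of 0 ∉ H) {t b : H}
    (ht : of 1 = t.val) (hb : of 0 ^ 2 = b.val) {D : Type*} [CommGroup D] {u v w : D}
    (huv : u ^ k = w * v ^ k) (hvu : v ^ k = w * u ^ k) :
    ∃ f : H →* D, f t = u ∧ f (MulAut.conjNormal (of 0) t) = v ∧ f b = w := by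
  let F : H →* ProdHolomorph D := (lift (inl_zpow_mul_twistedSwap_zpow huv hvu)).comp H.subtype
  have hFt : F t = SemidirectProduct.inl (u, v) := by simp [F, ← ht]
  have hFt' : F (MulAut.conjNormal (of 0) t) = SemidirectProduct.inl (v, u) := by
    simp [F, ← ht, twistedSwap_mul_inl]
  have hFb : F b = SemidirectProduct.inl (w, w) := by simp [F, ← hb, twistedSwap_sq]
  have hF : SemidirectProduct.rightHom.comp F = 1 := by
    refine MonoidHom.eq_of_eqOn_dense (closure_eq_top_of_index_eq_two hH ha ht hb) ?_
    rintro _ (rfl | rfl | rfl) <;> simp [hFt, hFt', hFb]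
  exact ⟨(MonoidHom.fst D D).comp (leftHom F hF), by simp [leftHom, hFt, hFt', hFb]⟩

theorem nonempty_abelianization_mulEquiv_of_index_eq_two (hH : H.index = 2) (ha : of 0 ∉ H)
    (ht : of 1 ∈ H) :
    Nonempty (Abelianization H ≃* Multiplicative (ℤ × ZMod (2 * k).natAbs)) := by
  have := Subgroup.normal_of_index_eq_two hH
  let t : H := ⟨of 1, ht⟩
  let b : H := ⟨of 0 ^ 2, Subgroup.sq_mem_of_index_two hH _⟩
  obtain ⟨hqb, hqk⟩ := zpow_eq_mul_zpow_swap_iff.1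
    ⟨map_zpow_eq_map_sq_mul_map_conj_zpow (t := t) (b := b) rfl of_one_zpow_mul_of_zero_zpow
        Abelianization.of,
      map_conj_zpow_eq_map_sq_mul_map_zpow (t := t) (b := b) rfl of_one_zpow_mul_of_zero_zpow
        Abelianization.of⟩
  let u : Multiplicative (ℤ × ZMod (2 * k).natAbs) := Multiplicative.ofAdd (1, 0)
  let s : Multiplicative (ℤ × ZMod (2 * k).natAbs) := Multiplicative.ofAdd (0, 1)
  have hs : s ^ (2 * k) = 1 := by
    rw [← pow_natAbs_eq_one]
    simp [s, ← ofAdd_nsmul]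
  obtain ⟨huv, hvu⟩ : u ^ k = s ^ k * (u / s) ^ k ∧ (u / s) ^ k = s ^ k * u ^ k :=
    zpow_eq_mul_zpow_swap_iff.2 (by simp only [div_div_cancel, hs, and_self])
  obtain ⟨φ, hφt, hφt', hφb⟩ := exists_hom_of_index_eq_two (t := t) (b := b) hH ha rfl rfl huv hvu
  exact nonempty_abelianization_mulEquiv_int_prod_zmod
    (closure_eq_top_of_index_eq_two hH ha rfl rfl) hqb (pow_natAbs_eq_one.2 hqk) hφt hφt' hφb

end BSt

theorem stmt_10_general (p k : ℤ)
    (θ : BSt (2 * p - 1) (2 * p + 1) k →* Multiplicative (ZMod 2))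
    (hθa : θ (PresentedGroup.of 0) = Multiplicative.ofAdd 1)
    (hθt : θ (PresentedGroup.of 1) = Multiplicative.ofAdd 0) :
    θ.ker.index = 2 ∧
      Nonempty (Abelianization θ.ker ≃* Multiplicative (ℤ × ZMod (2 * k).natAbs)) := by
  have : Fact (Nat.card (Multiplicative (ZMod 2))).Prime := ⟨by simp [Nat.prime_two]⟩
  have ha : PresentedGroup.of 0 ∉ θ.ker := by simp [MonoidHom.mem_ker, hθa]
  have hθ : θ ≠ 1 := fun h ↦ ha (by simp [h])
  have hindex : θ.ker.index = 2 := by simpa using index_ker_eq_card_of_ne_one hθ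
  exact ⟨hindex, BSt.nonempty_abelianization_mulEquiv_of_index_eq_two hindex ha hθt⟩

theorem stmt_10 (p l : ℤ) (hp : 1 ≤ p) (hl : 1 ≤ l)
    (θ : BSt (2 * p - 1) (2 * p + 1) (2 * l) →* Multiplicative (ZMod 2))
    (hθa : θ (PresentedGroup.of 0) = Multiplicative.ofAdd 1)
    (hθt : θ (PresentedGroup.of 1) = Multiplicative.ofAdd 0) :
    (MonoidHom.ker θ).index = 2 ∧
      Nonempty (Abelianization ↥(MonoidHom.ker θ) ≃*
        Multiplicative (ℤ × ZMod (4 * l).natAbs)) := by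
  rw [show 4 * l = 2 * (2 * l) by ring]
  exact stmt_10_general p (2 * l) θ hθa hθt
end
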